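/- Let l, m ≥ 0 be integers and let D_l = {(x₁,x₂,t) ∈ ℝ²×ℝ : 2^{−2l} ≤ |x₁ − t| ≤ 2^{−2l+1}}. Then there is a constant C (independent of l, m, g) such that ‖ ∫_{ℝ²} e^{i(x·ξ + t|ξ|)} ĝ(ξ) ψ_m(ξ) dξ ‖_{L²(D_l, dx dt)} ≤ C · 2^{m/2 − l} ‖g‖_{L²(ℝ²)}. -/

import Mathlib

open MeasureTheory Real Set
open scoped ENNReal

noncomputable section

/-- Euclidean norm on `ℝ²` (the product norm on `ℝ × ℝ` is the sup norm, so we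
spell out the Euclidean one). -/
def enorm2 (ξ : ℝ × ℝ) : ℝ := Real.sqrt (ξ.1 ^ 2 + ξ.2 ^ 2)

/-- Fourier transform on `ℝ²` (nonunitary convention). -/
def ft2 (g : ℝ × ℝ → ℂ) (ξ : ℝ × ℝ) : ℂ :=
  ∫ y : ℝ × ℝ, Complex.exp (-(Complex.I) * ((y.1 * ξ.1 + y.2 * ξ.2 : ℝ) : ℂ)) * g y

/-- Fourier transform of the arclength measure `dσ` on the unit circle in `ℝ²`. -/
def sigmaHat (ξ : ℝ × ℝ) : ℂ :=
  ∫ θ in Set.Ioc (0:ℝ) (2 * π),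
    Complex.exp (-(Complex.I) * ((ξ.1 * Real.cos θ + ξ.2 * Real.sin θ : ℝ) : ℂ))

/-- The operator `𝒜_t g(r,x₃) = (2π)⁻² ∫ e^{i(((r²+t²)/2)ξ₁+x₃ξ₂)} \widehat{dσ}(trξ) ĝ(ξ) dξ`. -/
def Aop (g : ℝ × ℝ → ℂ) (t r x₃ : ℝ) : ℂ :=
  (((2 * π) ^ (-2 : ℤ) : ℝ) : ℂ) *
    ∫ ξ : ℝ × ℝ,
      Complex.exp (Complex.I * ((((r ^ 2 + t ^ 2) / 2) * ξ.1 + x₃ * ξ.2 : ℝ) : ℂ)) *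
        sigmaHat (t * r * ξ.1, t * r * ξ.2) * ft2 g ξ

/-- A Littlewood–Paley bump: nonnegative, smooth, supported in `[1−10⁻³, 2+10⁻³]`,
with `∑_{j∈ℤ} φ(2^{−j}s) = 1` for all `s > 0`. -/
def IsLPBump (φ : ℝ → ℝ) : Prop :=
  ContDiff ℝ (⊤ : ℕ∞) φ ∧ (∀ s, 0 ≤ φ s) ∧
    Function.support φ ⊆ Set.Icc (1 - 1/1000) (2 + 1/1000) ∧
    ∀ s : ℝ, 0 < s → HasSum (fun j : ℤ => φ ((2:ℝ) ^ (-j) * s)) 1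

/-- The Littlewood–Paley projection `𝒫_j`, defined via its multiplier `φ(2^{−j}|ξ|)`. -/
def proj (φ : ℝ → ℝ) (j : ℤ) (g : ℝ × ℝ → ℂ) (x : ℝ × ℝ) : ℂ :=
  (((2 * π) ^ (-2 : ℤ) : ℝ) : ℂ) *
    ∫ ξ : ℝ × ℝ,
      Complex.exp (Complex.I * ((x.1 * ξ.1 + x.2 * ξ.2 : ℝ) : ℂ)) *
        ((φ ((2:ℝ) ^ (-j) * enorm2 ξ) : ℝ) : ℂ) * ft2 g ξ

/-- `φ_{<ℓ}(s) = ∑_{j<ℓ} φ(2^{−j} s)`. -/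
def philt (φ : ℝ → ℝ) (l : ℤ) (s : ℝ) : ℝ :=
  ∑' j : ℤ, if j < l then φ ((2:ℝ) ^ (-j) * s) else 0

/-- The projection `𝒫_{<ℓ}`, with multiplier `φ_{<ℓ}(|ξ|)`. -/
def projLt (φ : ℝ → ℝ) (l : ℤ) (g : ℝ × ℝ → ℂ) (x : ℝ × ℝ) : ℂ :=
  (((2 * π) ^ (-2 : ℤ) : ℝ) : ℂ) *
    ∫ ξ : ℝ × ℝ,
      Complex.exp (Complex.I * ((x.1 * ξ.1 + x.2 * ξ.2 : ℝ) : ℂ)) *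
        ((philt φ l (enorm2 ξ) : ℝ) : ℂ) * ft2 g ξ

/-- The angular cutoff `ψ_m(ξ) = φ(2^m |ξ₁/|ξ| + 1|)`. -/
def psiA (φ : ℝ → ℝ) (m : ℤ) (ξ : ℝ × ℝ) : ℝ :=
  φ ((2:ℝ) ^ m * |ξ.1 / enorm2 ξ + 1|)

/-!
On a slice `x₁ - t = s` the phase `x·ξ + t|ξ|` equals `sξ₁ + t(ξ₁ + |ξ|) + x₂ξ₂`, so there the
operator is a Fourier transform in the variables `(ξ₁ + |ξ|, ξ₂)`. On the support of `ψ_m` the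
Jacobian `ξ₁/|ξ| + 1` of this change of variables is at least a multiple of `2^{-m}`, and Plancherel
bounds the `L²` norm on each slice by a multiple of `2^{m/2} ‖g‖`. Integrating the square over
`|s| ≲ 2^{-2l}` gives the further factor `2^{-l}`.

Plancherel is applied in dual form: pairing `u ↦ ∫ e^{i⟪P x, u⟫} F(x) dμ(x)` with a Schwartz
function `h` gives the integral of `F` against the inverse Fourier transform of `h` composed with a
multiple of `P`, so that only an upper bound for the push-forward of `μ` under `P` is needed.
-/

open scoped SchwartzMap FourierTransform RealInnerProductSpace

section Duality

lemma exists_inner_eq_of_norm_le {𝕜 E H : Type*} [RCLike 𝕜] [AddCommGroup E] [Module 𝕜 E]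
    [NormedAddCommGroup H] [InnerProductSpace 𝕜 H] [CompleteSpace H] {ι : E →ₗ[𝕜] H}
    (hι : DenseRange ι) (T : E →ₗ[𝕜] 𝕜) {K : ℝ} (hK : 0 ≤ K) (hT : ∀ x, ‖T x‖ ≤ K * ‖ι x‖) :
    ∃ G : H, ‖G‖ ≤ K ∧ ∀ x, inner 𝕜 G (ι x) = T x := by
  refine ⟨(InnerProductSpace.toDual 𝕜 H).symm (T.extendOfNorm ι), ?_, fun x => ?_⟩
  · rw [LinearIsometryEquiv.norm_map]
    exact LinearMap.opNorm_extendOfNorm_le hι hK hT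
  · rw [InnerProductSpace.toDual_symm_apply, LinearMap.extendOfNorm_eq hι ⟨K, hT⟩]

variable {V : Type*} [NormedAddCommGroup V] [InnerProductSpace ℝ V] [FiniteDimensional ℝ V]
  [MeasurableSpace V] [BorelSpace V]

lemma ae_eq_of_forall_integral_schwartzMap_mul_eq {f g : V → ℂ}
    (hf : LocallyIntegrable f) (hg : LocallyIntegrable g)
    (h : ∀ h : 𝓢(V, ℂ), ∫ v, h v * f v = ∫ v, h v * g v) : f =ᵐ[volume] g := by
  refine ae_eq_of_integral_contDiff_smul_eq hf hg fun χ hχ hχc => ?_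
  have hc : HasCompactSupport (Complex.ofRealCLM ∘ χ) := hχc.comp_left rfl
  have hs : ContDiff ℝ _ (Complex.ofRealCLM ∘ χ) := Complex.ofRealCLM.contDiff.comp hχ
  simpa using h (hc.toSchwartzMap hs)

lemma eLpNorm_two_le_of_forall_schwartzMap {f : V → ℂ} {p : ℝ≥0∞} [Fact (1 ≤ p)]
    (hf : MemLp f p) {K : ℝ≥0∞}
    (hK : ∀ h : 𝓢(V, ℂ), ‖∫ v, h v * f v‖ₑ ≤ K * eLpNorm h 2) : eLpNorm f 2 ≤ K := by
  rcases eq_or_ne K ⊤ with rfl | hK_top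
  · exact le_top
  let T := (Lp.toTemperedDistribution (hf.toLp f)).toLinearMap
  have hT (h : 𝓢(V, ℂ)) : T h = ∫ v, h v * f v := by
    refine (Lp.toTemperedDistribution_apply _ _).trans (integral_congr_ae ?_)
    filter_upwards [hf.coeFn_toLp] with v hv
    rw [hv, smul_eq_mul]
  have hbound (h : 𝓢(V, ℂ)) : ‖T h‖ ≤ K.toReal * ‖h.toLp 2‖ := by
    have hfin : K * eLpNorm h 2 ≠ ⊤ :=
      ENNReal.mul_ne_top hK_top (h.memLp 2 volume).eLpNorm_ne_top
    rw [SchwartzMap.norm_toLp, hT, ← toReal_enorm, ← ENNReal.toReal_mul]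
    exact ENNReal.toReal_mono hfin (hK h)
  obtain ⟨G, hG, hGT⟩ := exists_inner_eq_of_norm_le
    (ι := (SchwartzMap.toLpCLM ℂ (E := V) ℂ 2 volume).toLinearMap)
    (SchwartzMap.denseRange_toLpCLM ENNReal.ofNat_ne_top) T ENNReal.toReal_nonneg hbound
  have hstar : eLpNorm (star ⇑G) 2 = eLpNorm G 2 :=
    eLpNorm_congr_norm_ae (.of_forall fun v => norm_star (G v))
  have hfG (h : 𝓢(V, ℂ)) : ∫ v, h v * f v = ∫ v, h v * star (G v) := by
    rw [← hT, ← hGT, L2.inner_def]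
    refine integral_congr_ae ?_
    filter_upwards [h.coeFn_toLp 2] with v hv
    rw [← hv]
    rfl
  have hae : f =ᵐ[volume] star ⇑G := ae_eq_of_forall_integral_schwartzMap_mul_eq
      (hf.locallyIntegrable Fact.out) ((Lp.memLp G).star.locallyIntegrable one_le_two) hfG
  rw [eLpNorm_congr_ae hae, hstar]
  rwa [Lp.norm_def, ENNReal.toReal_le_toReal (Lp.eLpNorm_ne_top G) hK_top] at hG

end Duality

section FourierExtension

variable {V : Type*} [NormedAddCommGroup V] [InnerProductSpace ℝ V] [FiniteDimensional ℝ V]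
  [MeasurableSpace V] [BorelSpace V] {X : Type*} [MeasurableSpace X] {μ : Measure X}

/-- The oscillatory integral `u ↦ ∫ e^{i⟪P x, u⟫} F(x) dμ(x)` with phase map `P : X → V`. For `P` a
parametrisation of a submanifold of `V` this is the Fourier extension operator of that submanifold.
By the convention on Bochner integrals it is `0` when `F` is not integrable. -/
def fourierExtension (μ : Measure X) (P : X → V) (F : X → ℂ) (u : V) : ℂ :=
  ∫ x, Complex.exp (Complex.I * (⟪P x, u⟫ : ℝ)) * F x ∂μ

lemma integrable_cexp_I_mul_iff {θ : X → ℝ} (hθ : Measurable θ) {F : X → ℂ} :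
    Integrable (fun x => Complex.exp (Complex.I * θ x) * F x) μ ↔ Integrable F μ := by
  have bdd {θ : X → ℝ} (hθ : Measurable θ) {F : X → ℂ} (hF : Integrable F μ) :
      Integrable (fun x => Complex.exp (Complex.I * θ x) * F x) μ :=
    hF.bdd_mul (c := 1) (Measurable.aestronglyMeasurable (by fun_prop))
      (.of_forall fun x => (Complex.norm_exp_I_mul_ofReal _).le)
  refine ⟨fun h => (bdd hθ.neg h).congr (.of_forall fun x => ?_), bdd hθ⟩
  simp [← mul_assoc, ← Complex.exp_add]

variable {P : X → V} {F : X → ℂ}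

lemma fourierExtension_of_not_integrable (hP : Measurable P) (hF : ¬ Integrable F μ) :
    fourierExtension μ P F = 0 := by
  ext u
  exact integral_undef ((integrable_cexp_I_mul_iff (by fun_prop)).not.2 hF)

lemma continuous_fourierExtension (hP : Measurable P) : Continuous (fourierExtension μ P F) := by
  by_cases hF : Integrable F μ
  · refine continuous_of_dominated (bound := fun x => ‖F x‖) (fun u => ?_) (fun u => ?_) hF.norm ?_
    · exact ((integrable_cexp_I_mul_iff (by fun_prop)).2 hF).aestronglyMeasurable
    · exact .of_forall fun x => by rw [norm_mul, Complex.norm_exp_I_mul_ofReal, one_mul]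
    · exact .of_forall fun x => by fun_prop
  · rw [fourierExtension_of_not_integrable hP hF]
    exact continuous_zero

lemma memLp_top_fourierExtension (hP : Measurable P) : MemLp (fourierExtension μ P F) ⊤ := by
  refine memLp_top_of_bound (continuous_fourierExtension hP).aestronglyMeasurable
    (∫ x, ‖F x‖ ∂μ) (.of_forall fun u => (norm_integral_le_integral_norm _).trans_eq ?_)
  simp only [norm_mul, Complex.norm_exp_I_mul_ofReal, one_mul]

lemma fourierInv_inv_two_pi_smul (h : V → ℂ) (w : V) :
    𝓕⁻ h ((2 * π)⁻¹ • w) = ∫ u, Complex.exp (Complex.I * (⟪w, u⟫ : ℝ)) * h u := by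
  rw [Real.fourierInv_eq']
  congr 1 with u
  rw [inner_smul_right, real_inner_comm, mul_inv_cancel_left₀ two_pi_pos.ne', smul_eq_mul,
    mul_comm Complex.I]

lemma integral_mul_fourierExtension [SFinite μ] (hP : Measurable P) (hF : Integrable F μ)
    {h : V → ℂ} (hh : Integrable h) :
    ∫ u, h u * fourierExtension μ P F u = ∫ x, 𝓕⁻ h ((2 * π)⁻¹ • P x) * F x ∂μ := by
  have hint : Integrable (fun z : V × X =>
      Complex.exp (Complex.I * (⟪P z.2, z.1⟫ : ℝ)) * (h z.1 * F z.2)) (volume.prod μ) :=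
    (integrable_cexp_I_mul_iff (by fun_prop)).2 (hh.mul_prod hF)
  calc ∫ u, h u * fourierExtension μ P F u
      = ∫ u, ∫ x, Complex.exp (Complex.I * (⟪P x, u⟫ : ℝ)) * (h u * F x) ∂μ := by
        simp only [fourierExtension, ← integral_const_mul, mul_left_comm (h _)]
    _ = ∫ x, (∫ u, Complex.exp (Complex.I * (⟪P x, u⟫ : ℝ)) * (h u * F x)) ∂μ :=
        integral_integral_swap hint
    _ = ∫ x, 𝓕⁻ h ((2 * π)⁻¹ • P x) * F x ∂μ := by
        simp only [fourierInv_inv_two_pi_smul, ← mul_assoc, integral_mul_const]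

lemma eLpNorm_comp_le_of_map_le {Y E : Type*} [MeasurableSpace Y] [NormedAddCommGroup E]
    {ν : Measure Y} {f : X → Y} (hf : AEMeasurable f μ) {A : ℝ≥0∞} (hA : μ.map f ≤ A • ν)
    {p : ℝ≥0∞} (hp : p ≠ ⊤) {h : Y → E} (hh : AEStronglyMeasurable h (μ.map f)) :
    eLpNorm (h ∘ f) p μ ≤ A ^ (1 / p).toReal * eLpNorm h p ν := by
  rw [← eLpNorm_map_measure hh hf]
  exact (eLpNorm_mono_measure h hA).trans_eq (eLpNorm_smul_measure_of_ne_top hp h A)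

lemma eLpNorm_two_fourierInv_schwartzMap (h : 𝓢(V, ℂ)) : eLpNorm (𝓕⁻ ⇑h) 2 = eLpNorm h 2 := by
  have key := SchwartzMap.norm_fourier_toL2_eq (𝓕⁻ h)
  rw [FourierTransform.fourier_fourierInv_eq, SchwartzMap.norm_toLp, SchwartzMap.norm_toLp,
    ENNReal.toReal_eq_toReal_iff' (h.memLp 2 volume).eLpNorm_ne_top
      ((𝓕⁻ h).memLp 2 volume).eLpNorm_ne_top, SchwartzMap.fourierInv_coe] at key
  exact key.symm

lemma map_inv_two_pi_smul_le {A : ℝ≥0∞} (hP : Measurable P) (hA : μ.map P ≤ A • volume) :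
    μ.map (fun x => (2 * π)⁻¹ • P x) ≤
      (ENNReal.ofReal ((2 * π) ^ Module.finrank ℝ V) * A) • volume := by
  have hscale : (volume : Measure V).map (fun v => (2 * π)⁻¹ • v) =
      ENNReal.ofReal ((2 * π) ^ Module.finrank ℝ V) • volume := by
    rw [Measure.map_addHaar_smul _ (by positivity), inv_pow, inv_inv, abs_of_pos (by positivity)]
  have hcomp : μ.map (fun x => (2 * π)⁻¹ • P x) = (μ.map P).map (fun v => (2 * π)⁻¹ • v) :=
    (Measure.map_map (by fun_prop) hP).symm
  calc μ.map (fun x => (2 * π)⁻¹ • P x)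
      ≤ (A • volume).map (fun v => (2 * π)⁻¹ • v) :=
        hcomp.trans_le (Measure.map_mono hA (by fun_prop))
    _ = (ENNReal.ofReal ((2 * π) ^ Module.finrank ℝ V) * A) • volume := by
        rw [Measure.map_smul, hscale, smul_smul, mul_comm]

lemma enorm_integral_mul_le {f g : X → ℂ} (hf : AEStronglyMeasurable f μ)
    (hg : AEStronglyMeasurable g μ) :
    ‖∫ x, f x * g x ∂μ‖ₑ ≤ eLpNorm f 2 μ * eLpNorm g 2 μ :=
  calc ‖∫ x, f x * g x ∂μ‖ₑ ≤ eLpNorm (f • g) 1 μ := by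
        rw [eLpNorm_one_eq_lintegral_enorm]
        exact enorm_integral_le_lintegral_enorm _
    _ ≤ eLpNorm f 2 μ * eLpNorm g 2 μ := eLpNorm_smul_le_mul_eLpNorm hg hf

theorem eLpNorm_two_fourierExtension_le [SFinite μ] {A : ℝ≥0∞} (hP : Measurable P)
    (hA : μ.map P ≤ A • volume) :
    eLpNorm (fourierExtension μ P F) 2 ≤
      (ENNReal.ofReal ((2 * π) ^ Module.finrank ℝ V) * A) ^ (1 / 2 : ℝ≥0∞).toReal *
        eLpNorm F 2 μ := by
  by_cases hF : Integrable F μ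
  swap
  · rw [fourierExtension_of_not_integrable hP hF, eLpNorm_zero]
    exact zero_le
  have hP' : Measurable fun x => (2 * π)⁻¹ • P x := by fun_prop
  refine eLpNorm_two_le_of_forall_schwartzMap (memLp_top_fourierExtension hP) fun h => ?_
  have hcont : Continuous (𝓕⁻ ⇑h) := h.fourierInv_coe ▸ (𝓕⁻ h).continuous
  rw [integral_mul_fourierExtension hP hF h.integrable, mul_right_comm,
    ← eLpNorm_two_fourierInv_schwartzMap]
  refine (enorm_integral_mul_le (hcont.measurable.comp hP').aestronglyMeasurable hF.1).trans ?_
  gcongr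
  exact eLpNorm_comp_le_of_map_le hP'.aemeasurable (map_inv_two_pi_smul_le hP hA)
    ENNReal.ofNat_ne_top hcont.aestronglyMeasurable

lemma eLpNorm_two_sq {E : Type*} [NormedAddCommGroup E] (f : X → E) (μ : Measure X) :
    eLpNorm f 2 μ ^ 2 = ∫⁻ x, ‖f x‖ₑ ^ 2 ∂μ := by
  simpa using eLpNorm_nnreal_pow_eq_lintegral (μ := μ) (f := f) (p := 2) two_ne_zero

theorem lintegral_fourierExtension_sq_le [SFinite μ] {A : ℝ≥0∞} (hP : Measurable P)
    (hA : μ.map P ≤ A • volume) :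
    ∫⁻ u, ‖fourierExtension μ P F u‖ₑ ^ 2 ≤
      ENNReal.ofReal ((2 * π) ^ Module.finrank ℝ V) * A * ∫⁻ x, ‖F x‖ₑ ^ 2 ∂μ := by
  rw [← eLpNorm_two_sq, ← eLpNorm_two_sq]
  refine (pow_le_pow_left' (eLpNorm_two_fourierExtension_le hP hA) 2).trans_eq ?_
  rw [mul_pow, ← ENNReal.rpow_mul_natCast]
  simp

end FourierExtension

section PlaneFourierTransform

lemma ft2_eq_fourierExtension (g : ℝ × ℝ → ℂ) (ξ : ℝ × ℝ) :
    ft2 g ξ = fourierExtension volume (fun y => WithLp.toLp 2 (-y)) g (WithLp.toLp 2 ξ) := by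
  refine integral_congr_ae (.of_forall fun y => ?_)
  simp only [WithLp.prod_inner_apply, Prod.fst_neg, Prod.snd_neg, RCLike.inner_apply, conj_trivial]
  congr 2
  push_cast
  ring

theorem lintegral_fourierExtension_toLp_sq_le {X : Type*} [MeasurableSpace X] {μ : Measure X}
    [SFinite μ] {P : X → ℝ × ℝ} {A : ℝ≥0∞} (hP : Measurable P) (hA : μ.map P ≤ A • volume)
    (F : X → ℂ) :
    ∫⁻ u : ℝ × ℝ,
        ‖fourierExtension μ (fun x => WithLp.toLp 2 (P x)) F (WithLp.toLp 2 u)‖ₑ ^ 2 ≤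
      ENNReal.ofReal ((2 * π) ^ 2) * A * ∫⁻ x, ‖F x‖ₑ ^ 2 ∂μ := by
  have hmp := WithLp.volume_preserving_toLp ℝ ℝ
  have hP' : Measurable fun x => WithLp.toLp 2 (P x) := hmp.measurable.comp hP
  have hA' : μ.map (fun x => WithLp.toLp 2 (P x)) ≤ A • volume :=
    calc μ.map (fun x => WithLp.toLp 2 (P x)) = (μ.map P).map (WithLp.toLp 2) :=
          (Measure.map_map hmp.measurable hP).symm
      _ ≤ (A • volume).map (WithLp.toLp 2) := Measure.map_mono hA hmp.measurable
      _ = A • volume := by rw [Measure.map_smul, hmp.map_eq]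
  have hmeas := (continuous_fourierExtension (μ := μ) (F := F) hP').measurable
  rw [hmp.lintegral_comp (f := fun v => ‖fourierExtension μ _ F v‖ₑ ^ 2) (by fun_prop)]
  refine (lintegral_fourierExtension_sq_le hP' hA').trans_eq ?_
  rw [(WithLp.linearEquiv 2 ℝ (ℝ × ℝ)).finrank_eq, Module.finrank_prod, Module.finrank_self]

theorem lintegral_ft2_sq_le (g : ℝ × ℝ → ℂ) :
    ∫⁻ ξ, ‖ft2 g ξ‖ₑ ^ 2 ≤ ENNReal.ofReal ((2 * π) ^ 2) * ∫⁻ y, ‖g y‖ₑ ^ 2 := by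
  have hneg : (volume : Measure (ℝ × ℝ)).map (fun y => -y) ≤ (1 : ℝ≥0∞) • volume := by
    rw [one_smul]
    exact (Measure.measurePreserving_neg _).map_eq.le
  simpa only [ft2_eq_fourierExtension, mul_one] using
    lintegral_fourierExtension_toLp_sq_le measurable_neg hneg g

end PlaneFourierTransform

section ChangeOfVariables

lemma volume_le_of_le_deriv {f f' : ℝ → ℝ} {s : Set ℝ} {c : ℝ} (hc : 0 < c)
    (hs : MeasurableSet s) (hf : ∀ x ∈ s, HasDerivWithinAt f (f' x) s x) (hm : MonotoneOn f s)
    (hf' : ∀ x ∈ s, c ≤ f' x) : volume s ≤ ENNReal.ofReal (1 / c) * volume (f '' s) := by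
  rw [← lintegral_deriv_eq_volume_image_of_monotoneOn hs hf hm]
  calc volume s = ENNReal.ofReal (1 / c) * ∫⁻ _ in s, ENNReal.ofReal c := by
        rw [setLIntegral_const, ← mul_assoc, ← ENNReal.ofReal_mul (by positivity),
          one_div_mul_cancel hc.ne', ENNReal.ofReal_one, one_mul]
    _ ≤ ENNReal.ofReal (1 / c) * ∫⁻ x in s, ENNReal.ofReal (f' x) := by
        gcongr ENNReal.ofReal (1 / c) * ?_
        exact setLIntegral_mono' hs fun x hx => ENNReal.ofReal_le_ofReal (hf' x hx)

lemma map_restrict_le_deriv_le {α : Type*} [MeasurableSpace α] {ν : Measure α} [SFinite ν]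
    {f f' : ℝ × α → ℝ} (hf : Measurable f) (hf' : Measurable f')
    (hderiv : ∀ᵐ y ∂ν, ∀ x, HasDerivAt (fun x => f (x, y)) (f' (x, y)) x)
    (hnonneg : ∀ p, 0 ≤ f' p) {c : ℝ} (hc : 0 < c) :
    ((volume.prod ν).restrict {p | c ≤ f' p}).map (fun p => (f p, p.2)) ≤
      ENNReal.ofReal (1 / c) • volume.prod ν := by
  have hφ : Measurable fun p => (f p, p.2) := by fun_prop
  refine Measure.le_iff.2 fun T hT => ?_
  have hms : MeasurableSet ((fun p => (f p, p.2)) ⁻¹' T ∩ {p | c ≤ f' p}) :=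
    (hφ hT).inter (measurableSet_le measurable_const hf')
  rw [Measure.map_apply hφ hT, Measure.restrict_apply (hφ hT), Measure.smul_apply, smul_eq_mul,
    Measure.prod_apply_symm hms, Measure.prod_apply_symm hT,
    ← lintegral_const_mul _ (measurable_measure_prodMk_right hT)]
  refine lintegral_mono_ae ?_
  filter_upwards [hderiv] with y hy
  have hmono : Monotone fun x => f (x, y) :=
    monotone_of_hasDerivAt_nonneg hy fun x => hnonneg (x, y)
  refine (volume_le_of_le_deriv hc (measurable_prodMk_right hms)
    (fun x _ => (hy x).hasDerivWithinAt) (hmono.monotoneOn _) fun x hx => hx.2).trans ?_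
  gcongr
  rintro _ ⟨x, hx, rfl⟩
  exact hx.1

lemma continuous_enorm2 : Continuous enorm2 := by
  unfold enorm2
  fun_prop

lemma measurable_fst_div_enorm2_add_one : Measurable fun ξ : ℝ × ℝ => ξ.1 / enorm2 ξ + 1 := by
  have := continuous_enorm2.measurable
  fun_prop

lemma fst_div_enorm2_add_one_nonneg (ξ : ℝ × ℝ) : 0 ≤ ξ.1 / enorm2 ξ + 1 := by
  have hnonneg : 0 ≤ enorm2 ξ := Real.sqrt_nonneg _
  have hle : |ξ.1| ≤ enorm2 ξ := Real.abs_le_sqrt (le_add_of_nonneg_right (sq_nonneg _))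
  have hquot : |ξ.1 / enorm2 ξ| ≤ 1 := by
    rw [abs_div, abs_of_nonneg hnonneg]
    exact div_le_one_of_le₀ hle hnonneg
  linarith [neg_le_of_abs_le hquot]

lemma hasDerivAt_add_enorm2 {y : ℝ} (hy : y ≠ 0) (x : ℝ) :
    HasDerivAt (fun x => x + enorm2 (x, y)) (x / enorm2 (x, y) + 1) x := by
  have hpos : x ^ 2 + y ^ 2 ≠ 0 := by positivity
  have h : HasDerivAt (fun x => √(x ^ 2 + y ^ 2)) (x / √(x ^ 2 + y ^ 2)) x := by
    convert ((hasDerivAt_pow 2 x).add_const (y ^ 2)).sqrt hpos using 1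
    field_simp
    norm_num [mul_comm]
  rw [add_comm (x / _)]
  exact (hasDerivAt_id x).add h

/-- The change of frequency variables `ξ ↦ (ξ₁ + |ξ|, ξ₂)`. On a slice `x₁ - t = s` the phase
`x·ξ + t|ξ|` equals `sξ₁` plus the pairing of this with `(t, x₂)`; its Jacobian is `ξ₁/|ξ| + 1`. -/
def nullPhase (ξ : ℝ × ℝ) : ℝ × ℝ := (ξ.1 + enorm2 ξ, ξ.2)

lemma measurable_nullPhase : Measurable nullPhase := by
  have := continuous_enorm2.measurable
  unfold nullPhase
  fun_prop

theorem map_nullPhase_le {c : ℝ} (hc : 0 < c) :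
    (volume.restrict {ξ | c ≤ ξ.1 / enorm2 ξ + 1}).map nullPhase ≤
      ENNReal.ofReal (1 / c) • volume := by
  refine map_restrict_le_deriv_le measurable_nullPhase.fst measurable_fst_div_enorm2_add_one ?_
    fst_div_enorm2_add_one_nonneg hc
  filter_upwards [Measure.ae_ne volume (0 : ℝ)] with y hy using hasDerivAt_add_enorm2 hy

end ChangeOfVariables

section Slab

lemma measurePreserving_slabCoordinates :
    MeasurePreserving fun p : ℝ × (ℝ × ℝ) => ((p.1 + p.2.1, p.2.2), p.2.1) := by
  have hshear : MeasurePreserving (fun q : (ℝ × ℝ) × ℝ => (q.1, q.2 + q.1.1)) :=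
    (MeasurePreserving.id _).skew_product (g := fun u x => x + u.1)
      (by fun_prop) (.of_forall fun u : ℝ × ℝ => (measurePreserving_add_right volume u.1).map_eq)
  have hassoc : MeasurePreserving (MeasurableEquiv.prodAssoc (α := ℝ) (β := ℝ) (γ := ℝ)).symm :=
    (measurePreserving_prodAssoc _ _ _).symm _
  have hswap : MeasurePreserving (Prod.map id Prod.swap : ℝ × (ℝ × ℝ) → ℝ × (ℝ × ℝ)) :=
    (MeasurePreserving.id _).prod Measure.measurePreserving_swap
  exact hassoc.comp (hswap.comp (Measure.measurePreserving_swap.comp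
    (hshear.comp Measure.measurePreserving_swap)))

lemma lintegral_slab_le {H : (ℝ × ℝ) × ℝ → ℝ≥0∞} (hH : Measurable H) {E : Set ℝ}
    (hE : MeasurableSet E) {K : ℝ≥0∞}
    (hK : ∀ s, ∫⁻ u : ℝ × ℝ, H ((s + u.1, u.2), u.1) ≤ K) :
    ∫⁻ z in {z : (ℝ × ℝ) × ℝ | z.1.1 - z.2 ∈ E}, H z ≤ K * volume E := by
  have hslab : MeasurableSet {z : (ℝ × ℝ) × ℝ | z.1.1 - z.2 ∈ E} :=
    measurableSet_preimage (by fun_prop) hE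
  have hpre : (fun p : ℝ × (ℝ × ℝ) => ((p.1 + p.2.1, p.2.2), p.2.1)) ⁻¹'
      {z : (ℝ × ℝ) × ℝ | z.1.1 - z.2 ∈ E} = E ×ˢ univ := by
    ext p
    simp
  calc ∫⁻ z in {z : (ℝ × ℝ) × ℝ | z.1.1 - z.2 ∈ E}, H z
      = ∫⁻ p : ℝ × (ℝ × ℝ) in E ×ˢ univ, H ((p.1 + p.2.1, p.2.2), p.2.1) := by
        rw [← measurePreserving_slabCoordinates.setLIntegral_comp_preimage hslab hH, hpre]
    _ = ∫⁻ s in E, ∫⁻ u : ℝ × ℝ, H ((s + u.1, u.2), u.1) := by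
        rw [Measure.volume_eq_prod ℝ (ℝ × ℝ), setLIntegral_prod _ (by fun_prop),
          Measure.restrict_univ]
    _ ≤ ∫⁻ _ in E, K := lintegral_mono fun s => hK s
    _ = K * volume E := setLIntegral_const E K

end Slab

section ConeExtension

/-- The Fourier extension operator of the light cone `{(ξ, |ξ|)}`, with density `f(ξ) dξ`:
the solution `∫ e^{i(x·ξ + t|ξ|)} f(ξ) dξ` of the half-wave equation at `z = (x, t)`. -/
def coneExtension (f : ℝ × ℝ → ℂ) (z : (ℝ × ℝ) × ℝ) : ℂ :=
  ∫ ξ : ℝ × ℝ,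
    Complex.exp (Complex.I * ((z.1.1 * ξ.1 + z.1.2 * ξ.2 + z.2 * enorm2 ξ : ℝ) : ℂ)) * f ξ

lemma continuous_coneExtension (f : ℝ × ℝ → ℂ) : Continuous (coneExtension f) := by
  let conePoint (ξ : (ℝ × ℝ) × ℝ) : WithLp 2 (WithLp 2 (ℝ × ℝ) × ℝ) :=
    WithLp.toLp 2 (WithLp.toLp 2 ξ.1, ξ.2)
  have hcont : Continuous conePoint := by fun_prop
  have hmeas : Measurable fun ξ => conePoint (ξ, enorm2 ξ) :=
    (hcont.comp (continuous_id.prodMk continuous_enorm2)).measurable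
  have heq : coneExtension f =
      fourierExtension volume (fun ξ => conePoint (ξ, enorm2 ξ)) f ∘ conePoint := by
    ext z
    refine integral_congr_ae (.of_forall fun ξ => ?_)
    simp [conePoint, WithLp.prod_inner_apply]
  rw [heq]
  exact (continuous_fourierExtension hmeas).comp hcont

lemma coneExtension_slice {f : ℝ × ℝ → ℂ} {c : ℝ} (hf : ∀ ξ, f ξ ≠ 0 → c ≤ ξ.1 / enorm2 ξ + 1)
    (s : ℝ) (u : ℝ × ℝ) :
    coneExtension f ((s + u.1, u.2), u.1) =
      fourierExtension (volume.restrict {ξ | c ≤ ξ.1 / enorm2 ξ + 1})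
        (fun ξ => WithLp.toLp 2 (nullPhase ξ))
        (fun ξ => Complex.exp (Complex.I * (s * ξ.1 : ℝ)) * f ξ) (WithLp.toLp 2 u) := by
  rw [fourierExtension, setIntegral_eq_integral_of_forall_compl_eq_zero]
  · refine integral_congr_ae (.of_forall fun ξ => ?_)
    dsimp only
    rw [← mul_assoc, ← Complex.exp_add]
    simp only [nullPhase, WithLp.prod_inner_apply, RCLike.inner_apply, conj_trivial]
    congr 2
    push_cast
    ring
  · intro ξ hξ
    rw [not_imp_comm.1 (hf ξ) hξ, mul_zero, mul_zero]

theorem lintegral_slab_coneExtension_sq_le {f : ℝ × ℝ → ℂ} {c : ℝ} (hc : 0 < c)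
    (hf : ∀ ξ, f ξ ≠ 0 → c ≤ ξ.1 / enorm2 ξ + 1) {E : Set ℝ} (hE : MeasurableSet E) :
    ∫⁻ z in {z : (ℝ × ℝ) × ℝ | z.1.1 - z.2 ∈ E}, ‖coneExtension f z‖ₑ ^ 2 ≤
      ENNReal.ofReal ((2 * π) ^ 2) * ENNReal.ofReal (1 / c) * (∫⁻ ξ, ‖f ξ‖ₑ ^ 2) * volume E := by
  have hmeas := (continuous_coneExtension f).measurable
  refine lintegral_slab_le (by fun_prop) hE fun s => ?_
  simp only [coneExtension_slice hf]
  refine (lintegral_fourierExtension_toLp_sq_le measurable_nullPhase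
    (map_nullPhase_le hc) _).trans ?_
  gcongr _ * ?_
  refine (setLIntegral_le_lintegral _ _).trans_eq (lintegral_congr fun ξ => ?_)
  rw [enorm_mul, ← ofReal_norm, Complex.norm_exp_I_mul_ofReal, ENNReal.ofReal_one, one_mul]

end ConeExtension

section AngularCutoff

variable {φ : ℝ → ℝ} {a M : ℝ}

lemma mul_zpow_neg_le_of_psiA_ne_zero (hsupp : ∀ s, φ s ≠ 0 → a ≤ s) {m : ℤ} {ξ : ℝ × ℝ}
    (hξ : psiA φ m ξ ≠ 0) : a * (2 : ℝ) ^ (-m) ≤ ξ.1 / enorm2 ξ + 1 := by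
  have h := hsupp _ hξ
  rw [abs_of_nonneg (fst_div_enorm2_add_one_nonneg ξ)] at h
  rwa [zpow_neg, ← div_eq_mul_inv, div_le_iff₀' (by positivity)]

lemma lintegral_ft2_mul_psiA_sq_le (hbdd : ∀ s, |φ s| ≤ M) (m : ℤ) (g : ℝ × ℝ → ℂ) :
    ∫⁻ ξ, ‖ft2 g ξ * (psiA φ m ξ : ℂ)‖ₑ ^ 2 ≤
      ENNReal.ofReal ((2 * π * M) ^ 2) * ∫⁻ y, ‖g y‖ₑ ^ 2 := by
  have hM : 0 ≤ M := (abs_nonneg _).trans (hbdd 0)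
  have hle (ξ : ℝ × ℝ) : ‖ft2 g ξ * (psiA φ m ξ : ℂ)‖ₑ ^ 2 ≤
      ENNReal.ofReal (M ^ 2) * ‖ft2 g ξ‖ₑ ^ 2 := by
    rw [enorm_mul, mul_pow, mul_comm, ENNReal.ofReal_pow hM, ← ofReal_norm (Complex.ofReal _),
      Complex.norm_real]
    gcongr
    exact hbdd _
  calc ∫⁻ ξ, ‖ft2 g ξ * (psiA φ m ξ : ℂ)‖ₑ ^ 2
      ≤ ENNReal.ofReal (M ^ 2) * ∫⁻ ξ, ‖ft2 g ξ‖ₑ ^ 2 := by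
        rw [← lintegral_const_mul' _ _ ENNReal.ofReal_ne_top]
        exact lintegral_mono hle
    _ ≤ ENNReal.ofReal (M ^ 2) * (ENNReal.ofReal ((2 * π) ^ 2) * ∫⁻ y, ‖g y‖ₑ ^ 2) := by
        gcongr
        exact lintegral_ft2_sq_le g
    _ = ENNReal.ofReal ((2 * π * M) ^ 2) * ∫⁻ y, ‖g y‖ₑ ^ 2 := by
        rw [← mul_assoc, ← ENNReal.ofReal_mul (by positivity), mul_pow _ M, mul_comm (M ^ 2)]

lemma volume_abs_preimage_Icc_le {b c : ℝ} :
    volume (abs ⁻¹' Icc b c) ≤ ENNReal.ofReal (2 * c) := by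
  refine (measure_mono fun s hs => abs_le.1 hs.2).trans_eq ((Real.volume_Icc (a := -c)).trans ?_)
  ring_nf

lemma rpow_half_sub_sq (l m : ℤ) :
    ((2 : ℝ) ^ ((m : ℝ) / 2 - (l : ℝ))) ^ 2 = 2 ^ m * 2 ^ (-(2 * l)) := by
  rw [← Real.rpow_mul_natCast zero_le_two, ← zpow_add₀ two_ne_zero, ← Real.rpow_intCast]
  push_cast
  ring_nf

theorem thin_slab_L2_estimate_general (ha : 0 < a) (hsupp : ∀ s, φ s ≠ 0 → a ≤ s)
    (hbdd : ∀ s, |φ s| ≤ M) (l m : ℤ) (g : ℝ × ℝ → ℂ) :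
    eLpNorm (fun z : (ℝ × ℝ) × ℝ =>
        ∫ ξ : ℝ × ℝ,
          Complex.exp (Complex.I *
              ((z.1.1 * ξ.1 + z.1.2 * ξ.2 + z.2 * enorm2 ξ : ℝ) : ℂ)) *
            ft2 g ξ * ((psiA φ m ξ : ℝ) : ℂ)) 2
        (volume.restrict
          {z : (ℝ × ℝ) × ℝ |
            (2:ℝ) ^ (-(2 * l)) ≤ |z.1.1 - z.2| ∧ |z.1.1 - z.2| ≤ (2:ℝ) ^ (-(2 * l) + 1)}) ≤
      ENNReal.ofReal (8 * π ^ 2 * M / √a * (2:ℝ) ^ ((m:ℝ)/2 - (l:ℝ))) * eLpNorm g 2 volume := by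
  have hM : 0 ≤ M := (abs_nonneg _).trans (hbdd 0)
  let f (ξ : ℝ × ℝ) : ℂ := ft2 g ξ * (psiA φ m ξ : ℂ)
  let E : Set ℝ := abs ⁻¹' Icc (2 ^ (-(2 * l))) (2 ^ (-(2 * l) + 1))
  have hE : MeasurableSet E := measurable_abs measurableSet_Icc
  have hf (ξ : ℝ × ℝ) (hξ : f ξ ≠ 0) : a * (2 : ℝ) ^ (-m) ≤ ξ.1 / enorm2 ξ + 1 :=
    mul_zpow_neg_le_of_psiA_ne_zero hsupp fun h => hξ (by simp [f, h])
  have hconst : (2 * π) ^ 2 * (1 / (a * (2 : ℝ) ^ (-m))) * (2 * π * M) ^ 2 *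
      (2 * 2 ^ (-(2 * l) + 1)) = (8 * π ^ 2 * M / √a * (2 : ℝ) ^ ((m : ℝ) / 2 - (l : ℝ))) ^ 2 := by
    rw [mul_pow _ ((2 : ℝ) ^ _), rpow_half_sub_sq, div_pow, Real.sq_sqrt ha.le,
      zpow_add_one₀ two_ne_zero, zpow_neg 2 m]
    field_simp
    ring
  simp only [mul_assoc (Complex.exp _)]
  rw [← ENNReal.pow_le_pow_left_iff two_ne_zero, mul_pow, eLpNorm_two_sq, eLpNorm_two_sq]
  calc ∫⁻ z in {z : (ℝ × ℝ) × ℝ | z.1.1 - z.2 ∈ E}, ‖coneExtension f z‖ₑ ^ 2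
      ≤ ENNReal.ofReal ((2 * π) ^ 2) * ENNReal.ofReal (1 / (a * (2 : ℝ) ^ (-m))) *
          (∫⁻ ξ, ‖f ξ‖ₑ ^ 2) * volume E :=
        lintegral_slab_coneExtension_sq_le (by positivity) hf hE
    _ ≤ ENNReal.ofReal ((2 * π) ^ 2) * ENNReal.ofReal (1 / (a * (2 : ℝ) ^ (-m))) *
          (ENNReal.ofReal ((2 * π * M) ^ 2) * ∫⁻ y, ‖g y‖ₑ ^ 2) *
          ENNReal.ofReal (2 * 2 ^ (-(2 * l) + 1)) := by
        gcongr
        · exact lintegral_ft2_mul_psiA_sq_le hbdd m g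
        · exact volume_abs_preimage_Icc_le
    _ = ENNReal.ofReal (8 * π ^ 2 * M / √a * (2 : ℝ) ^ ((m : ℝ) / 2 - (l : ℝ))) ^ 2 *
          ∫⁻ y, ‖g y‖ₑ ^ 2 := by
        rw [← mul_assoc, mul_right_comm, ← ENNReal.ofReal_mul (by positivity),
          ← ENNReal.ofReal_mul (by positivity), ← ENNReal.ofReal_mul (by positivity), hconst,
          ENNReal.ofReal_pow (by positivity)]

end AngularCutoff

lemma IsLPBump.le_one {φ : ℝ → ℝ} (hφ : IsLPBump φ) (s : ℝ) : φ s ≤ 1 := by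
  obtain ⟨-, hnonneg, hsupp, hsum⟩ := hφ
  rcases lt_or_ge 0 s with hs | hs
  · simpa using le_hasSum (hsum s hs) 0 fun j _ => hnonneg _
  · have : φ s = 0 := Function.notMem_support.1 fun h => by linarith [(hsupp h).1]
    simp [this]

/-- Lemma 3.8 (improved `L²` estimate on thin slabs): with
`D_l = {(x,t) : 2^{−2l} ≤ |x₁ − t| ≤ 2^{−2l+1}}`,
`‖∫ e^{i(x·ξ+t|ξ|)} ĝ(ξ) ψ_m(ξ) dξ‖_{L²(D_l)} ≲ 2^{m/2−l} ‖g‖_{L²(ℝ²)}`,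
with constant independent of `l, m, g`. -/
theorem thin_slab_L2_estimate (φ : ℝ → ℝ) (hφ : IsLPBump φ) :
    ∃ C : ℝ, 0 < C ∧ ∀ l m : ℤ, 0 ≤ l → 0 ≤ m → ∀ g : ℝ × ℝ → ℂ,
      eLpNorm (fun z : (ℝ × ℝ) × ℝ =>
          ∫ ξ : ℝ × ℝ,
            Complex.exp (Complex.I *
                ((z.1.1 * ξ.1 + z.1.2 * ξ.2 + z.2 * enorm2 ξ : ℝ) : ℂ)) *
              ft2 g ξ * ((psiA φ m ξ : ℝ) : ℂ)) 2
          (volume.restrict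
            {z : (ℝ × ℝ) × ℝ |
              (2:ℝ) ^ (-(2 * l)) ≤ |z.1.1 - z.2| ∧ |z.1.1 - z.2| ≤ (2:ℝ) ^ (-(2 * l) + 1)}) ≤
        ENNReal.ofReal (C * (2:ℝ) ^ ((m:ℝ)/2 - (l:ℝ))) * eLpNorm g 2 volume := by
  refine ⟨8 * π ^ 2 * 1 / √(1 - 1/1000), by positivity, fun l m _ _ g => ?_⟩
  exact thin_slab_L2_estimate_general (by norm_num) (fun s hs => (hφ.2.2.1 hs).1)
    (fun s => abs_le.2 ⟨by linarith [hφ.2.1 s], hφ.le_one s⟩) l m g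

end
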